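/- The satisfiability problem and the finite satisfiability problem for FL² with equality in the presence of two distinguished transitive relations are both undecidable: there is no algorithm that, given a sentence of the two-variable fluted fragment with equality over a signature with two distinguished binary predicates, decides whether it has a model (respectively, a finite model) in which both distinguished relations are transitive. -/

import Mathlib

/- STATEMENT 16: The satisfiability and finite satisfiability problems for the
two-variable fluted fragment with equality and two distinguished transitive
relations are undecidable. -/

namespace FlutedTwoTransEq

/-- FL²-formulas with equality over countably many unary predicates (indexed by `ℕ`)
and two distinguished binary predicates (indexed by `Fin 2`); the index `m ≤ 2` records
that the free variables form a suffix of `x₁, …, x_m`, all atoms ending at the last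
variable, and only the last variable may be quantified. -/
inductive F : ℕ → Type
  | patom (p : ℕ) {m : ℕ} (h1 : 1 ≤ m) (h2 : m ≤ 2) : F m
  | batom (k : Fin 2) : F 2
  | eqatom : F 2
  | fls {m : ℕ} (h : m ≤ 2) : F m
  | not {m : ℕ} (φ : F m) : F m
  | and {m : ℕ} (φ ψ : F m) : F m
  | or {m : ℕ} (φ ψ : F m) : F m
  | imp {m : ℕ} (φ ψ : F m) : F m
  | ex {m : ℕ} (h : m ≤ 1) (φ : F (m + 1)) : F m
  | all {m : ℕ} (h : m ≤ 1) (φ : F (m + 1)) : F m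

/-- A structure interpreting the unary predicates and the two distinguished binary
predicates. -/
structure Str (A : Type) where
  U : ℕ → A → Prop
  T : Fin 2 → A → A → Prop

def Sat {A : Type} (M : Str A) : ∀ {m : ℕ}, F m → (Fin m → A) → Prop
  | m, .patom p h1 _, v => M.U p (v ⟨m - 1, by omega⟩)
  | _, .batom k, v => M.T k (v 0) (v 1)
  | _, .eqatom, v => v 0 = v 1
  | _, .fls _, _ => False
  | _, .not φ, v => ¬ Sat M φ v
  | _, .and φ ψ, v => Sat M φ v ∧ Sat M ψ v
  | _, .or φ ψ, v => Sat M φ v ∨ Sat M ψ v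
  | _, .imp φ ψ, v => Sat M φ v → Sat M ψ v
  | _, .ex _ φ, v => ∃ a : A, Sat M φ (Fin.snoc v a)
  | _, .all _ φ, v => ∀ a : A, Sat M φ (Fin.snoc v a)

/-- `φ` has a model in which both distinguished binary relations are transitive. -/
def Satisfiable (φ : F 0) : Prop :=
  ∃ (A : Type) (_ : Nonempty A) (M : Str A),
    (∀ k, Transitive (M.T k)) ∧ Sat M φ (fun i => i.elim0)

/-- `φ` has a finite model in which both distinguished binary relations are
transitive. -/
def FinitelySatisfiable (φ : F 0) : Prop :=
  ∃ (A : Type) (_ : Nonempty A) (_ : Finite A) (M : Str A),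
    (∀ k, Transitive (M.T k)) ∧ Sat M φ (fun i => i.elim0)

/-- A concrete Gödel numbering of FL²-formulas with equality. -/
def encode : ∀ {m : ℕ}, F m → ℕ
  | _, .patom p _ _ => Nat.pair 0 p
  | _, .batom k => Nat.pair 1 k.val
  | _, .eqatom => Nat.pair 2 0
  | _, .fls _ => Nat.pair 3 0
  | _, .not φ => Nat.pair 4 (encode φ)
  | _, .and φ ψ => Nat.pair 5 (Nat.pair (encode φ) (encode ψ))
  | _, .or φ ψ => Nat.pair 6 (Nat.pair (encode φ) (encode ψ))
  | _, .imp φ ψ => Nat.pair 7 (Nat.pair (encode φ) (encode ψ))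
  | _, .ex _ φ => Nat.pair 8 (encode φ)
  | _, .all _ φ => Nat.pair 9 (encode φ)

section Gadgets

theorem snoc0 {A : Type} (v : Fin 0 → A) (a : A) : (Fin.snoc v a : Fin 1 → A) = ![a] := by
  ext i; fin_cases i; rfl

theorem snoc1 {A : Type} (a b : A) : (Fin.snoc ![a] b : Fin 2 → A) = ![a, b] := by
  ext i; fin_cases i <;> rfl

/-- unary atom with one free variable -/
def p1 (p : ℕ) : F 1 := .patom p (by decide) (by decide)
/-- unary atom on the second of two variables -/
def p2 (p : ℕ) : F 2 := .patom p (by decide) (by decide)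
def ex0 (φ : F 1) : F 0 := .ex (by decide) φ
def ex1 (φ : F 2) : F 1 := .ex (by decide) φ
def all0 (φ : F 1) : F 0 := .all (by decide) φ
def all1 (φ : F 2) : F 1 := .all (by decide) φ
def b2 (k : Fin 2) : F 2 := .batom k

/-- `∀ a, P a → ∃ b, R a b` -/
def AE (P : F 1) (R : F 2) : F 0 := all0 (.imp P (ex1 R))
/-- `∀ a, P a → ∀ b, Q a b → R a b` -/
def AA (P : F 1) (Q R : F 2) : F 0 := all0 (.imp P (all1 (.imp Q R)))

def bigAnd : List (F 0) → F 0
  | [] => .not (.fls (by decide))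
  | φ :: l => .and φ (bigAnd l)

def bigOr1 : List (F 1) → F 1
  | [] => .fls (by decide)
  | φ :: l => .or φ (bigOr1 l)

def bigOr2 : List (F 2) → F 2
  | [] => .fls (by decide)
  | φ :: l => .or φ (bigOr2 l)

variable {A : Type} (M : Str A)

abbrev S0 (φ : F 0) : Prop := Sat M φ (fun i => i.elim0)
abbrev S1 (φ : F 1) (a : A) : Prop := Sat M φ ![a]
abbrev S2 (φ : F 2) (a b : A) : Prop := Sat M φ ![a, b]

@[simp] theorem sat_p1 (p a) : Sat M (p1 p) ![a] ↔ M.U p a := by simp [p1, Sat]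
@[simp] theorem sat_p2 (p a b) : Sat M (p2 p) ![a, b] ↔ M.U p b := by simp [p2, Sat]
@[simp] theorem sat_b2 (k a b) : Sat M (b2 k) ![a, b] ↔ M.T k a b := by simp [b2, Sat]
@[simp] theorem sat_eq (a b) : Sat M (.eqatom) ![a, b] ↔ a = b := by simp [Sat]
@[simp] theorem sat_ex0 (φ v) : Sat M (ex0 φ) v ↔ ∃ a, Sat M φ ![a] := by simp [ex0, Sat, snoc0]
@[simp] theorem sat_all0 (φ v) : Sat M (all0 φ) v ↔ ∀ a, Sat M φ ![a] := by simp [all0, Sat, snoc0]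
@[simp] theorem sat_ex1 (φ a) : Sat M (ex1 φ) ![a] ↔ ∃ b, Sat M φ ![a, b] := by
  simp [ex1, Sat]
@[simp] theorem sat_all1 (φ a) : Sat M (all1 φ) ![a] ↔ ∀ b, Sat M φ ![a, b] := by
  simp [all1, Sat]
@[simp] theorem sat_and {m} (φ ψ : F m) (v) : Sat M (φ.and ψ) v ↔ Sat M φ v ∧ Sat M ψ v := by
  simp [Sat]
@[simp] theorem sat_or {m} (φ ψ : F m) (v) : Sat M (φ.or ψ) v ↔ Sat M φ v ∨ Sat M ψ v := by
  simp [Sat]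
@[simp] theorem sat_imp {m} (φ ψ : F m) (v) : Sat M (φ.imp ψ) v ↔ (Sat M φ v → Sat M ψ v) := by
  simp [Sat]
@[simp] theorem sat_not {m} (φ : F m) (v) : Sat M (φ.not) v ↔ ¬ Sat M φ v := by
  simp [Sat]
@[simp] theorem sat_AE (P R v) :
    Sat M (AE P R) v ↔ ∀ a, Sat M P ![a] → ∃ b, Sat M R ![a, b] := by simp [AE]
@[simp] theorem sat_AA (P Q R v) :
    Sat M (AA P Q R) v ↔ ∀ a, Sat M P ![a] → ∀ b, Sat M Q ![a, b] → Sat M R ![a, b] := by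
  simp [AA]
@[simp] theorem sat_bigAnd (l v) : Sat M (bigAnd l) v ↔ ∀ φ ∈ l, Sat M φ v := by
  induction l with
  | nil => simp [bigAnd, Sat]
  | cons a l ih => simp [bigAnd, ih]
@[simp] theorem sat_bigOr1 (l v) : Sat M (bigOr1 l) v ↔ ∃ φ ∈ l, Sat M φ v := by
  induction l with
  | nil => simp [bigOr1, Sat]
  | cons a l ih => simp [bigOr1, ih]
@[simp] theorem sat_bigOr2 (l v) : Sat M (bigOr2 l) v ↔ ∃ φ ∈ l, Sat M φ v := by
  induction l with
  | nil => simp [bigOr2, Sat]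
  | cons a l ih => simp [bigOr2, ih]

end Gadgets

/-- A finite tile system. -/
structure Sys where
  C : Type
  Cs : Finset C
  H : C → C → Prop
  V : C → C → Prop
  endTile : C → Prop
  corner : C → Prop
  I : ℕ → C → Prop
  code : C → ℕ
  inj : ∀ c ∈ Cs, ∀ d ∈ Cs, code c = code d → c = d

section Formula

def pz (i : ℕ) (j : Fin 2) : ℕ := Nat.pair 0 (Nat.pair (i % 4) j)
def pD (c : ℕ) : ℕ := Nat.pair 1 c
def pQ (q : ℕ) : ℕ := Nat.pair 2 q
def pK (q : ℕ) : ℕ := Nat.pair 3 q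
def pcor : ℕ := Nat.pair 4 0
def pnb : ℕ := Nat.pair 4 1
def pbt (i : ℕ) : ℕ := Nat.pair 5 (i % 4)

def nxt (q : ℕ) : ℕ := if q ≤ 1 then 0 else (q - 1) / 2 + 1
def sym (q : ℕ) : ℕ := if q ≤ 1 then q else 2 + (q - 1) % 2

open Classical in
noncomputable def Sys.tl (S : Sys) (P : S.C → Prop) : List ℕ :=
  (S.Cs.toList.filter (fun c => decide (P c))).map (fun c => pD (S.code c))

noncomputable def Sys.in1 (S : Sys) (P : S.C → Prop) : F 1 := bigOr1 ((S.tl P).map p1)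
noncomputable def Sys.in2 (S : Sys) (P : S.C → Prop) : F 2 := bigOr2 ((S.tl P).map p2)

@[simp] theorem Sys.sat_in1 (S : Sys) {A} (M : Str A) (P a) :
    Sat M (S.in1 P) ![a] ↔ ∃ c ∈ S.Cs, P c ∧ M.U (pD (S.code c)) a := by
  simp [Sys.in1, Sys.tl, and_assoc]

@[simp] theorem Sys.sat_in2 (S : Sys) {A} (M : Str A) (P a b) :
    Sat M (S.in2 P) ![a, b] ↔ ∃ c ∈ S.Cs, P c ∧ M.U (pD (S.code c)) b := by
  simp [Sys.in2, Sys.tl, and_assoc]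

def bot : List (F 0) := (List.range 2).flatMap fun m =>
  [AE (p1 (pbt (2*m))) (.and (b2 0) (p2 (pbt (2*m+1)))),
   AE (p1 (pbt (2*m+1))) (.and (.and (b2 0) (b2 1)) (p2 (pbt (2*m)))),
   AA (p1 (pbt (2*m))) (.and (p2 (pbt (2*m))) (b2 0)) .eqatom,
   AE (p1 (pbt (2*m+1))) (.and (b2 1) (p2 (pbt (2*m+2))))]

noncomputable def vert (S : Sys) : List (F 0) := (List.range 4).flatMap fun i =>
  (List.finRange 2).flatMap fun j =>
  [all0 (.imp (p1 (pbt i)) (p1 (pz i 0))),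
   AE (.and (p1 (pz i j)) (.not (S.in1 S.endTile))) (.and (b2 (j+1)) (.and (p2 (pz i (j+1))) (p2 pnb))),
   AE (.and (p1 (pz i (j+1))) (p1 pnb)) (.and (b2 (j+1)) (p2 (pz i j))),
   AA (p1 (pz i j)) (.and (p2 (pz i j)) (b2 (j+1))) .eqatom] ++
   S.Cs.toList.map (fun c => AA (.and (p1 (pz i j)) (p1 (pD (S.code c))))
     (.and (p2 (pz i (j+1))) (b2 (j+1))) (S.in2 (S.V c)))

noncomputable def horz (S : Sys) : List (F 0) := (List.range 2).flatMap fun m =>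
  (List.finRange 2).flatMap fun j =>
  [AA (p1 (pz (2*m+1) j)) (.and (.or (p2 (pz (2*m) j)) (p2 (pz (2*m+2) j))) (p2 pnb))
    (.and (.imp (b2 0) (b2 1)) (.imp (b2 1) (b2 0)))] ++
   S.Cs.toList.map (fun c => AA (.and (p1 (pz (2*m+1) j)) (p1 (pD (S.code c))))
     (.and (p2 (pz (2*m+2) j)) (b2 1)) (S.in2 (S.H c))) ++
   S.Cs.toList.map (fun c => AA (.and (p1 (pz (2*m+1) j)) (p1 (pD (S.code c))))
     (.and (p2 (pz (2*m) j)) (b2 1)) (S.in2 (fun d => S.H d c)))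

open Classical in
noncomputable def misc (S : Sys) : List (F 0) :=
  ex0 (.and (p1 pcor) (.and (p1 (pbt 0)) (S.in1 S.corner))) ::
  (List.range 4).map (fun q => all0 (.imp (p1 (pK q)) (S.in1 (S.I q)))) ++
  S.Cs.toList.flatMap (fun c => S.Cs.toList.flatMap (fun d =>
    if c = d then [] else [all0 (.imp (p1 (pD (S.code c))) (.not (p1 (pD (S.code d)))))]))

noncomputable def fixed (S : Sys) : F 0 := bigAnd (misc S ++ bot ++ vert S ++ horz S)

def qr (q i : ℕ) : F 0 := AA (.and (p1 (pQ q)) (p1 (pbt i)))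
  (.and (p2 (pbt (i+1))) (.or (b2 0) (b2 1))) (p2 (pQ (nxt q)))

def qrule (q : ℕ) : F 0 := .and (all0 (.imp (p1 (pQ q)) (p1 (pK (sym q)))))
  (.and (qr q 0) (.and (qr q 1) (.and (qr q 2) (qr q 3))))

def qrules : ℕ → F 0
  | 0 => qrule 0
  | n+1 => .and (qrule (n+1)) (qrules n)

noncomputable def Phi (S : Sys) (n : ℕ) : F 0 :=
  .and (fixed S) (.and (all0 (.imp (p1 pcor) (p1 (pQ (n+1))))) (qrules (n+1)))

/-- Semantic content of `Phi`. -/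
structure Mod (S : Sys) (n : ℕ) {A : Type} (M : Str A) : Prop where
  cor : ∃ a, M.U pcor a ∧ M.U (pbt 0) a ∧ ∃ c ∈ S.Cs, S.corner c ∧ M.U (pD (S.code c)) a
  init : ∀ q < 4, ∀ a, M.U (pK q) a → ∃ c ∈ S.Cs, S.I q c ∧ M.U (pD (S.code c)) a
  excl : ∀ c ∈ S.Cs, ∀ d ∈ S.Cs, c ≠ d → ∀ a, M.U (pD (S.code c)) a → ¬ M.U (pD (S.code d)) a
  bot1 : ∀ m < 2, ∀ a, M.U (pbt (2*m)) a → ∃ b, M.T 0 a b ∧ M.U (pbt (2*m+1)) b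
  bot2 : ∀ m < 2, ∀ a, M.U (pbt (2*m+1)) a → ∃ b, (M.T 0 a b ∧ M.T 1 a b) ∧ M.U (pbt (2*m)) b
  bot3 : ∀ m < 2, ∀ a, M.U (pbt (2*m)) a → ∀ b, M.U (pbt (2*m)) b ∧ M.T 0 a b → a = b
  bot4 : ∀ m < 2, ∀ a, M.U (pbt (2*m+1)) a → ∃ b, M.T 1 a b ∧ M.U (pbt (2*m+2)) b
  btz : ∀ i < 4, ∀ a, M.U (pbt i) a → M.U (pz i 0) a
  up : ∀ i < 4, ∀ j : Fin 2, ∀ a, M.U (pz i j) a ∧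
    (¬ ∃ c ∈ S.Cs, S.endTile c ∧ M.U (pD (S.code c)) a) →
    ∃ b, M.T (j+1) a b ∧ M.U (pz i (j+1)) b ∧ M.U pnb b
  down : ∀ i < 4, ∀ j : Fin 2, ∀ a, M.U (pz i (j+1)) a ∧ M.U pnb a →
    ∃ b, M.T (j+1) a b ∧ M.U (pz i j) b
  veq : ∀ i < 4, ∀ j : Fin 2, ∀ a, M.U (pz i j) a → ∀ b, M.U (pz i j) b ∧ M.T (j+1) a b → a = b
  V : ∀ i < 4, ∀ j : Fin 2, ∀ c ∈ S.Cs, ∀ a, M.U (pz i j) a ∧ M.U (pD (S.code c)) a →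
    ∀ b, M.U (pz i (j+1)) b ∧ M.T (j+1) a b → ∃ d ∈ S.Cs, S.V c d ∧ M.U (pD (S.code d)) b
  sync : ∀ m < 2, ∀ j : Fin 2, ∀ a, M.U (pz (2*m+1) j) a → ∀ b,
    (M.U (pz (2*m) j) b ∨ M.U (pz (2*m+2) j) b) ∧ M.U pnb b →
    (M.T 0 a b → M.T 1 a b) ∧ (M.T 1 a b → M.T 0 a b)
  H1 : ∀ m < 2, ∀ j : Fin 2, ∀ c ∈ S.Cs, ∀ a, M.U (pz (2*m+1) j) a ∧ M.U (pD (S.code c)) a →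
    ∀ b, M.U (pz (2*m+2) j) b ∧ M.T 1 a b → ∃ d ∈ S.Cs, S.H c d ∧ M.U (pD (S.code d)) b
  H2 : ∀ m < 2, ∀ j : Fin 2, ∀ c ∈ S.Cs, ∀ a, M.U (pz (2*m+1) j) a ∧ M.U (pD (S.code c)) a →
    ∀ b, M.U (pz (2*m) j) b ∧ M.T 1 a b → ∃ d ∈ S.Cs, S.H d c ∧ M.U (pD (S.code d)) b
  corQ : ∀ a, M.U pcor a → M.U (pQ (n+1)) a
  QK : ∀ q ≤ n+1, ∀ a, M.U (pQ q) a → M.U (pK (sym q)) a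
  QQ : ∀ q ≤ n+1, ∀ i < 4, ∀ a, M.U (pQ q) a ∧ M.U (pbt i) a →
    ∀ b, M.U (pbt (i+1)) b ∧ (M.T 0 a b ∨ M.T 1 a b) → M.U (pQ (nxt q)) b

theorem sat_qrules {A} (M : Str A) (n v) :
    Sat M (qrules n) v ↔ ∀ q ≤ n, Sat M (qrule q) v := by
  induction n with
  | zero => simp [qrules]
  | succ n ih =>
    simp only [qrules, sat_and, ih]
    constructor
    · rintro ⟨h, h'⟩ q hq
      rcases Nat.lt_or_ge q (n+1) with h1 | h1
      · exact h' q (by omega)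
      · obtain rfl : q = n+1 := by omega
        exact h
    · intro h
      exact ⟨h _ le_rfl, fun q hq => h q (by omega)⟩

theorem forall_flatMap {α β : Type*} (l : List α) (f : α → List β) (P : β → Prop) :
    (∀ b ∈ l.flatMap f, P b) ↔ ∀ a ∈ l, ∀ b ∈ f a, P b := by
  simp only [List.mem_flatMap]; grind

theorem forall_ite_list {β : Type*} (p : Prop) [Decidable p] (x : β) (P : β → Prop) :
    (∀ b ∈ (if p then [] else [x]), P b) ↔ (¬ p → P x) := by
  split <;> simp_all

theorem lt4 (P : ℕ → Prop) : (∀ i < 4, P i) ↔ P 0 ∧ P 1 ∧ P 2 ∧ P 3 :=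
  ⟨fun h => ⟨h 0 (by omega), h 1 (by omega), h 2 (by omega), h 3 (by omega)⟩,
   fun ⟨h0, h1, h2, h3⟩ i hi => by
    obtain rfl | rfl | rfl | rfl : i = 0 ∨ i = 1 ∨ i = 2 ∨ i = 3 := by omega
    all_goals assumption⟩

theorem sat_Phi (S : Sys) (n : ℕ) {A} (M : Str A) : S0 M (Phi S n) ↔ Mod S n M := by
  simp only [S0, Phi, fixed, sat_and, sat_bigAnd, List.forall_mem_append, sat_qrules]
  simp only [misc, bot, vert, horz, forall_flatMap, List.forall_mem_append, List.forall_mem_cons,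
    List.forall_mem_map, forall_ite_list, List.mem_range, List.mem_finRange, Finset.mem_toList,
    sat_AA, sat_AE, sat_and, sat_or, sat_imp, sat_not, sat_p1, sat_p2, sat_b2, sat_eq, sat_ex0,
    sat_all0, Sys.sat_in1, Sys.sat_in2, qrule, qr, List.not_mem_nil, false_imp_iff, implies_true,
    and_true, true_imp_iff, List.cons_append, List.nil_append]
  constructor
  · rintro ⟨⟨⟨⟨⟨h1, h2, h3⟩, h4⟩, h5⟩, h6⟩, h7, h8⟩
    exact
    { cor := h1
      init := h2
      excl := h3
      bot1 := fun m hm => (h4 m hm).1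
      bot2 := fun m hm => (h4 m hm).2.1
      bot3 := fun m hm => (h4 m hm).2.2.1
      bot4 := fun m hm => (h4 m hm).2.2.2
      btz := fun i hi => (h5 i hi 0).1
      up := fun i hi j => (h5 i hi j).2.1
      down := fun i hi j => (h5 i hi j).2.2.1
      veq := fun i hi j => (h5 i hi j).2.2.2.1
      V := fun i hi j => (h5 i hi j).2.2.2.2
      sync := fun m hm j => (h6 m hm j).1
      H1 := fun m hm j => (h6 m hm j).2.1
      H2 := fun m hm j => (h6 m hm j).2.2
      corQ := h7
      QK := fun q hq => (h8 q hq).1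
      QQ := fun q hq => (lt4 _).2 (h8 q hq).2 }
  · intro h
    exact ⟨⟨⟨⟨⟨h.cor, h.init, h.excl⟩, fun m hm => ⟨h.bot1 m hm, h.bot2 m hm, h.bot3 m hm,
      h.bot4 m hm⟩⟩, fun i hi j => ⟨h.btz i hi, h.up i hi j, h.down i hi j, h.veq i hi j,
      h.V i hi j⟩⟩, fun m hm j => ⟨h.sync m hm j, h.H1 m hm j, h.H2 m hm j⟩⟩, h.corQ,
      fun q hq => ⟨h.QK q hq, (lt4 _).1 (h.QQ q hq)⟩⟩

end Formula
section Extract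

theorem pbt_mod (x : ℕ) : pbt (x % 4) = pbt x := by simp [pbt]
theorem pbt_mod1 (x : ℕ) : pbt (x % 4 + 1) = pbt (x + 1) := by simp [pbt]
theorem pz_mod (x : ℕ) (j) : pz (x % 4) j = pz x j := by simp [pz]
theorem pbt_a (m : ℕ) : pbt (2 * (m % 2)) = pbt (2*m) := by
  simp only [pbt]; congr 1; omega
theorem pbt_b (m : ℕ) : pbt (2 * (m % 2) + 1) = pbt (2*m+1) := by
  simp only [pbt]; congr 1; omega
theorem pbt_c (m : ℕ) : pbt (2 * (m % 2) + 2) = pbt (2*m+2) := by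
  simp only [pbt]; congr 1; omega
theorem pz_a (m : ℕ) (j) : pz (2 * (m % 2)) j = pz (2*m) j := by
  simp only [pz]; congr 2; omega
theorem pz_b (m : ℕ) (j) : pz (2 * (m % 2) + 1) j = pz (2*m+1) j := by
  simp only [pz]; congr 2; omega
theorem pz_c (m : ℕ) (j) : pz (2 * (m % 2) + 2) j = pz (2*m+2) j := by
  simp only [pz]; congr 2; omega

theorem dep_seq {A : Type} (P : ℕ → A → Prop) (R : ℕ → A → A → Prop)
    (h : ∀ x a, P x a → ∃ b, P (x+1) b ∧ R x a b) (a0 : A) (h0 : P 0 a0) :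
    ∃ e : ℕ → A, e 0 = a0 ∧ ∀ x, P x (e x) ∧ R x (e x) (e (x+1)) := by
  choose f hf using h
  let g : ∀ x : ℕ, {a : A // P x a} := fun x =>
    Nat.rec ⟨a0, h0⟩ (fun x a => ⟨f x a.1 a.2, (hf x a.1 a.2).1⟩) x
  exact ⟨fun x => (g x).1, rfl, fun x => ⟨(g x).2, (hf x (g x).1 (g x).2).2⟩⟩

variable {S : Sys} {n : ℕ} {A : Type} {M : Str A}

theorem exists_bottom (hM : Mod S n M) (hT : ∀ k, Transitive (M.T k)) (a0 : A)
    (h0 : M.U (pbt 0) a0) :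
    ∃ e : ℕ → A, e 0 = a0 ∧ ∀ x, M.U (pbt x) (e x) ∧
      ((x % 2 = 0 → M.T 0 (e x) (e (x+1)) ∧ M.T 1 (e (x+1)) (e x)) ∧
       (x % 2 = 1 → M.T 1 (e x) (e (x+1)))) := by
  apply dep_seq (fun x a => M.U (pbt x) a)
    (fun x a b => (x % 2 = 0 → M.T 0 a b ∧ M.T 1 b a) ∧ (x % 2 = 1 → M.T 1 a b)) ?_ a0 h0
  intro x a ha
  obtain ⟨m, rfl | rfl⟩ := Nat.even_or_odd' x
  · have hm : m % 2 < 2 := Nat.mod_lt _ (by omega)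
    obtain ⟨b, hb, hb'⟩ := hM.bot1 _ hm a (by rwa [pbt_a])
    obtain ⟨a', ⟨h1, h2⟩, h3⟩ := hM.bot2 _ hm b hb'
    have := hM.bot3 _ hm a (by rwa [pbt_a]) a' ⟨h3, hT 0 hb h1⟩
    subst this
    rw [pbt_b] at hb'
    exact ⟨b, hb', fun _ => ⟨hb, h2⟩, fun h => by omega⟩
  · have hm : m % 2 < 2 := Nat.mod_lt _ (by omega)
    obtain ⟨b, hb, hb'⟩ := hM.bot4 _ hm a (by rwa [pbt_b])
    rw [pbt_c] at hb'
    exact ⟨b, hb', fun h => by omega, fun _ => hb⟩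

/-- A row of the grid, found in the model. -/
structure Row (S : Sys) {A : Type} (M : Str A) (j : Fin 2) (e : ℕ → A) (t : ℕ → S.C) : Prop where
  z : ∀ x, M.U (pz x j) (e x)
  mem : ∀ x, t x ∈ S.Cs
  D : ∀ x, M.U (pD (S.code (t x))) (e x)
  L : ∀ m, M.T (j+1) (e (2*m+1)) (e (2*m))
  R : ∀ m, M.T (j+1) (e (2*m+1)) (e (2*m+2))

theorem Mod.tile_unique (hM : Mod S n M) {c d : S.C} (hc : c ∈ S.Cs) (hd : d ∈ S.Cs) {a : A}
    (h1 : M.U (pD (S.code c)) a) (h2 : M.U (pD (S.code d)) a) : c = d := by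
  by_contra h
  exact hM.excl c hc d hd h a h1 h2

theorem row_H (hM : Mod S n M) {j : Fin 2} {e : ℕ → A} {t : ℕ → S.C}
    (z : ∀ x, M.U (pz x j) (e x)) (mem : ∀ x, t x ∈ S.Cs)
    (D : ∀ x, M.U (pD (S.code (t x))) (e x))
    (hL : ∀ m, M.T 1 (e (2*m+1)) (e (2*m))) (hR : ∀ m, M.T 1 (e (2*m+1)) (e (2*m+2))) :
    ∀ x, S.H (t x) (t (x+1)) := by
  intro x
  obtain ⟨m, rfl | rfl⟩ := Nat.even_or_odd' x
  · have hm : m % 2 < 2 := Nat.mod_lt _ (by omega)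
    obtain ⟨d, hd, h, h'⟩ := hM.H2 _ hm j _ (mem (2*m+1)) (e (2*m+1))
      ⟨by rw [pz_b]; exact z _, D _⟩ (e (2*m)) ⟨by rw [pz_a]; exact z _, hL m⟩
    rwa [hM.tile_unique hd (mem _) h' (D _)] at h
  · have hm : m % 2 < 2 := Nat.mod_lt _ (by omega)
    obtain ⟨d, hd, h, h'⟩ := hM.H1 _ hm j _ (mem (2*m+1)) (e (2*m+1))
      ⟨by rw [pz_b]; exact z _, D _⟩ (e (2*m+2)) ⟨by rw [pz_c]; exact z _, hR m⟩
    rwa [hM.tile_unique hd (mem _) h' (D _)] at h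

theorem row_succ (hM : Mod S n M) (hT : ∀ k, Transitive (M.T k)) {j : Fin 2} {e : ℕ → A}
    {t : ℕ → S.C} (h : Row S M j e t) (hs : ∀ x, ¬ S.endTile (t x)) :
    ∃ e' t', Row S M (j+1) e' t' ∧ (∀ x, S.V (t x) (t' x)) ∧ ∀ x, S.H (t' x) (t' (x+1)) := by
  have h4 : ∀ x : ℕ, x % 4 < 4 := fun x => Nat.mod_lt _ (by omega)
  have hup : ∀ x, ∃ b, M.T (j+1) (e x) b ∧ M.T (j+1) b (e x) ∧ M.U (pz x (j+1)) b ∧ M.U pnb b := by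
    intro x
    obtain ⟨b, h1, h2, h3⟩ := hM.up _ (h4 x) j (e x) ⟨by rw [pz_mod]; exact h.z x, by
      rintro ⟨c, hc, hc', hc''⟩
      rw [hM.tile_unique hc (h.mem x) hc'' (h.D x)] at hc'
      exact hs x hc'⟩
    obtain ⟨a, h5, h6⟩ := hM.down _ (h4 x) j b ⟨h2, h3⟩
    have := hM.veq _ (h4 x) j (e x) (by rw [pz_mod]; exact h.z x) a ⟨h6, hT _ h1 h5⟩
    rw [← this] at h5
    exact ⟨b, h1, h5, by rwa [pz_mod] at h2, h3⟩
  choose e' u1 u2 u3 u4 using hup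
  have hV : ∀ x, ∃ d ∈ S.Cs, S.V (t x) d ∧ M.U (pD (S.code d)) (e' x) := fun x =>
    hM.V _ (h4 x) j _ (h.mem x) (e x) ⟨by rw [pz_mod]; exact h.z x, h.D x⟩ (e' x)
      ⟨by rw [pz_mod]; exact u3 x, u1 x⟩
  choose t' v1 v2 v3 using hV
  have both : ∀ a b : A, M.T (j+1) a b → (M.T 0 a b → M.T 1 a b) ∧ (M.T 1 a b → M.T 0 a b) →
      ∀ k, M.T k a b := by
    intro a b h1 ⟨h2, h3⟩ k
    fin_cases j <;> fin_cases k <;> simp at h1 ⊢ <;> tauto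
  have hL : ∀ m k, M.T k (e' (2*m+1)) (e' (2*m)) := fun m => both _ _
    (hT _ (hT _ (u2 _) (h.L m)) (u1 _))
    (hM.sync (m % 2) (Nat.mod_lt _ (by omega)) (j+1) _ (by rw [pz_b]; exact u3 _) _
      ⟨.inl (by rw [pz_a]; exact u3 _), u4 _⟩)
  have hR : ∀ m k, M.T k (e' (2*m+1)) (e' (2*m+2)) := fun m => both _ _
    (hT _ (hT _ (u2 _) (h.R m)) (u1 _))
    (hM.sync (m % 2) (Nat.mod_lt _ (by omega)) (j+1) _ (by rw [pz_b]; exact u3 _) _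
      ⟨.inr (by rw [pz_c]; exact u3 _), u4 _⟩)
  exact ⟨e', t', ⟨u3, v1, v3, fun m => hL m _, fun m => hR m _⟩, v2,
    row_H hM u3 v1 v3 (fun m => hL m 1) (fun m => hR m 1)⟩

theorem sym_lt (q : ℕ) : sym q < 4 := by unfold sym; split <;> omega
theorem nxt_le (q : ℕ) : nxt q ≤ q := by unfold nxt; split <;> omega
theorem nxt_iter_le (q x : ℕ) : nxt^[x] q ≤ q := by
  induction x with
  | zero => simp
  | succ x ih => rw [Function.iterate_succ_apply']; exact (nxt_le _).trans ih

theorem row_zero (hM : Mod S n M) (hT : ∀ k, Transitive (M.T k)) :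
    ∃ e t, Row S M 0 e t ∧ S.corner (t 0) ∧ (∀ x, S.I (sym (nxt^[x] (n+1))) (t x)) ∧
      ∀ x, S.H (t x) (t (x+1)) := by
  obtain ⟨a0, h1, h2, c0, hc0, hc1, hc2⟩ := hM.cor
  obtain ⟨e, rfl, he⟩ := exists_bottom hM hT a0 h2
  have hQ : ∀ x, M.U (pQ (nxt^[x] (n+1))) (e x) := by
    intro x
    induction x with
    | zero => exact hM.corQ _ h1
    | succ x ih =>
      rw [Function.iterate_succ_apply']
      refine hM.QQ _ (nxt_iter_le _ _) (x % 4) (Nat.mod_lt _ (by omega)) (e x)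
        ⟨ih, by rw [pbt_mod]; exact (he x).1⟩ _ ⟨by rw [pbt_mod1]; exact (he (x+1)).1, ?_⟩
      rcases Nat.mod_two_eq_zero_or_one x with h | h
      · exact .inl ((he x).2.1 h).1
      · exact .inr ((he x).2.2 h)
  have hI : ∀ x, ∃ c ∈ S.Cs, S.I (sym (nxt^[x] (n+1))) c ∧ M.U (pD (S.code c)) (e x) := fun x =>
    hM.init _ (sym_lt _) _ (hM.QK _ (nxt_iter_le _ _) _ (hQ x))
  choose t ht1 ht2 ht3 using hI
  have z : ∀ x, M.U (pz x 0) (e x) := fun x => by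
    have := hM.btz (x % 4) (Nat.mod_lt _ (by omega)) (e x) (by rw [pbt_mod]; exact (he x).1)
    rwa [pz_mod] at this
  have hL : ∀ m, M.T 1 (e (2*m+1)) (e (2*m)) := fun m => ((he (2*m)).2.1 (by omega)).2
  have hR : ∀ m, M.T 1 (e (2*m+1)) (e (2*m+2)) := fun m => (he (2*m+1)).2.2 (by omega)
  refine ⟨e, t, ⟨z, ht1, ht3, hL, hR⟩, ?_, ht2, row_H hM z ht1 ht3 hL hR⟩
  rwa [← hM.tile_unique hc0 (ht1 0) hc2 (ht3 0)]

end Extract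
section Build

def Ed (w x x' : ℕ) : Prop := x % 2 = 1 ∧ (x' = x + 1 ∨ x' + 1 = x ∨ (x + 1 = 4 * w ∧ x' + 4 = 4 * w))

def mkT (w : ℕ) (k : Fin 2) (x y x' y' : ℕ) : Prop :=
  if k = 1 then y / 2 = y' / 2 ∧ (x = x' ∨ Ed w x x')
  else (y = 0 ∧ y' = 0 ∧ x / 2 = x' / 2) ∨
    (y ≠ 0 ∧ y' ≠ 0 ∧ (y+1) / 2 = (y'+1) / 2 ∧ (x = x' ∨ Ed w x x'))

theorem mkT_trans (w : ℕ) (k : Fin 2) (x y x' y' x'' y'' : ℕ) (h1 : mkT w k x y x' y')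
    (h2 : mkT w k x' y' x'' y'') : mkT w k x y x'' y'' := by
  unfold mkT Ed at *
  split at h1 <;> rename_i hk <;> simp only [hk, if_true, if_false] at h2 ⊢ <;> omega

def mkU (S : Sys) (n : ℕ) (t : ℕ → ℕ → S.C) (p x y : ℕ) : Prop :=
  p = Nat.pair 0 (Nat.pair (x % 4) (y % 2)) ∨ p = pD (S.code (t y x)) ∨
  (y = 0 ∧ (p = pQ (nxt^[x] (n+1)) ∨ p = pK (sym (nxt^[x] (n+1))) ∨ p = pbt x)) ∨
  (p = pcor ∧ x = 0 ∧ y = 0) ∨ (p = pnb ∧ y ≠ 0)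

variable (S : Sys) (n : ℕ) (t : ℕ → ℕ → S.C)

theorem mkU_z (i j x y) : mkU S n t (pz i j) x y ↔ i % 4 = x % 4 ∧ (j : ℕ) = y % 2 := by
  simp [mkU, pz, pD, pQ, pK, pbt, pcor, pnb, Nat.pair_eq_pair]
theorem mkU_D (c x y) : mkU S n t (pD c) x y ↔ c = S.code (t y x) := by
  simp [mkU, pD, pQ, pK, pbt, pcor, pnb, Nat.pair_eq_pair]
theorem mkU_Q (c x y) : mkU S n t (pQ c) x y ↔ y = 0 ∧ c = nxt^[x] (n+1) := by
  simp [mkU, pD, pQ, pK, pbt, pcor, pnb, Nat.pair_eq_pair]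
theorem mkU_K (c x y) : mkU S n t (pK c) x y ↔ y = 0 ∧ c = sym (nxt^[x] (n+1)) := by
  simp [mkU, pD, pQ, pK, pbt, pcor, pnb, Nat.pair_eq_pair]
theorem mkU_bt (i x y) : mkU S n t (pbt i) x y ↔ y = 0 ∧ i % 4 = x % 4 := by
  simp [mkU, pD, pQ, pK, pbt, pcor, pnb, Nat.pair_eq_pair]
theorem mkU_cor (x y) : mkU S n t pcor x y ↔ x = 0 ∧ y = 0 := by
  simp [mkU, pD, pQ, pK, pbt, pcor, pnb, Nat.pair_eq_pair]
theorem mkU_nb (x y) : mkU S n t pnb x y ↔ y ≠ 0 := by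
  simp [mkU, pD, pQ, pK, pbt, pcor, pnb, Nat.pair_eq_pair]

theorem mkT_0 (w x y x' y') : mkT w 0 x y x' y' ↔ (y = 0 ∧ y' = 0 ∧ x / 2 = x' / 2) ∨
    (y ≠ 0 ∧ y' ≠ 0 ∧ (y+1) / 2 = (y'+1) / 2 ∧ (x = x' ∨ Ed w x x')) := by simp [mkT]
theorem mkT_1 (w x y x' y') : mkT w 1 x y x' y' ↔
    y / 2 = y' / 2 ∧ (x = x' ∨ Ed w x x') := by simp [mkT]

def mkM (w N : ℕ) : Str (Fin (4*w) × Fin (N+1)) where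
  U p a := mkU S n t p a.1 a.2
  T k a b := mkT w k a.1 a.2 b.1 b.2

theorem fin2_cases (j : Fin 2) : (j = 0 ∧ j + 1 = 1) ∨ (j = 1 ∧ j + 1 = 0) := by
  fin_cases j <;> simp

variable {S n t}

theorem build {w N : ℕ} (hw : 0 < w)
    (mem : ∀ y ≤ N, ∀ x, t y x ∈ S.Cs)
    (hc : S.corner (t 0 0)) (hI : ∀ x, S.I (sym (nxt^[x] (n+1))) (t 0 x))
    (hH : ∀ y ≤ N, ∀ x, S.H (t y x) (t y (x+1)))
    (hV : ∀ y < N, ∀ x, S.V (t y x) (t (y+1) x))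
    (hs : ∀ x, S.endTile (t N x))
    (hp : ∀ y ≤ N, t y (4*w) = t y (4*w-4))
    (hn : nxt^[4*w-4] (n+1) = 0) : Mod S n (mkM S n t w N) where
  cor := ⟨(⟨0, by omega⟩, ⟨0, by omega⟩), by simp [mkM, mkU_cor], by simp [mkM, mkU_bt],
    t 0 0, mem 0 (by omega) 0, hc, by simp [mkM, mkU_D]⟩
  init := by
    rintro q hq ⟨⟨x, hx⟩, ⟨y, hy⟩⟩ h
    simp only [mkM, mkU_K] at h
    obtain ⟨rfl, rfl⟩ := h
    exact ⟨_, mem 0 (by omega) x, hI x, by simp [mkM, mkU_D]⟩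
  excl := by
    rintro c hc d hd hcd ⟨⟨x, hx⟩, ⟨y, hy⟩⟩ h h'
    simp only [mkM, mkU_D] at h h'
    exact hcd (S.inj c hc d hd (h.trans h'.symm))
  bot1 := by
    rintro m hm ⟨⟨x, hx⟩, ⟨y, hy⟩⟩ h
    simp only [mkM, mkU_bt] at h
    refine ⟨(⟨x+1, by omega⟩, ⟨0, by omega⟩), ?_⟩
    show mkT w 0 x y (x+1) 0 ∧ mkU S n t (pbt (2*m+1)) (x+1) 0
    rw [mkU_bt, mkT_0]; unfold Ed
    omega
  bot2 := by
    rintro m hm ⟨⟨x, hx⟩, ⟨y, hy⟩⟩ h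
    simp only [mkM, mkU_bt] at h
    refine ⟨(⟨x-1, by omega⟩, ⟨0, by omega⟩), ?_⟩
    show (mkT w 0 x y (x-1) 0 ∧ mkT w 1 x y (x-1) 0) ∧ mkU S n t (pbt (2*m)) (x-1) 0
    rw [mkU_bt, mkT_0, mkT_1]; unfold Ed
    omega
  bot3 := by
    rintro m hm ⟨⟨x, hx⟩, ⟨y, hy⟩⟩ h ⟨⟨x', hx'⟩, ⟨y', hy'⟩⟩ h'
    simp only [mkM, mkU_bt, mkT_0] at h h'
    simp only [Prod.mk.injEq, Fin.mk.injEq]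
    omega
  bot4 := by
    rintro m hm ⟨⟨x, hx⟩, ⟨y, hy⟩⟩ h
    simp only [mkM, mkU_bt] at h
    by_cases hx1 : x + 1 = 4 * w
    · refine ⟨(⟨4*w-4, by omega⟩, ⟨0, by omega⟩), ?_⟩
      show mkT w 1 x y (4*w-4) 0 ∧ mkU S n t (pbt (2*m+2)) (4*w-4) 0
      rw [mkU_bt, mkT_1]; unfold Ed
      omega
    · refine ⟨(⟨x+1, by omega⟩, ⟨0, by omega⟩), ?_⟩
      show mkT w 1 x y (x+1) 0 ∧ mkU S n t (pbt (2*m+2)) (x+1) 0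
      rw [mkU_bt, mkT_1]; unfold Ed
      omega
  btz := by
    rintro i hi ⟨⟨x, hx⟩, ⟨y, hy⟩⟩ h
    simp only [mkM, mkU_bt, mkU_z] at h ⊢
    simp [h]
  up := by
    rintro i hi j ⟨⟨x, hx⟩, ⟨y, hy⟩⟩ ⟨h, h'⟩
    have hyN : y ≠ N := by
      rintro rfl
      exact h' ⟨_, mem _ le_rfl x, hs x, by simp [mkM, mkU_D]⟩
    simp only [mkM, mkU_z] at h
    refine ⟨(⟨x, hx⟩, ⟨y+1, by omega⟩), ?_⟩
    show mkT w (j+1) x y x (y+1) ∧ mkU S n t (pz i (j+1)) x (y+1) ∧ mkU S n t pnb x (y+1)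
    obtain ⟨rfl, e⟩ | ⟨rfl, e⟩ := fin2_cases j <;>
    simp only [mkU_z, mkU_nb, e, mkT_0, mkT_1, Ed, true_or, and_true, Fin.val_zero, Fin.val_one] at h ⊢ <;> omega
  down := by
    rintro i hi j ⟨⟨x, hx⟩, ⟨y, hy⟩⟩ ⟨h, h'⟩
    simp only [mkM, mkU_z, mkU_nb] at h h'
    refine ⟨(⟨x, hx⟩, ⟨y-1, by omega⟩), ?_⟩
    show mkT w (j+1) x y x (y-1) ∧ mkU S n t (pz i j) x (y-1)
    obtain ⟨rfl, e⟩ | ⟨rfl, e⟩ := fin2_cases j <;>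
    simp only [mkU_z, mkU_nb, e, mkT_0, mkT_1, Ed, true_or, and_true, Fin.val_zero, Fin.val_one] at h ⊢ <;> omega
  veq := by
    rintro i hi j ⟨⟨x, hx⟩, ⟨y, hy⟩⟩ h ⟨⟨x', hx'⟩, ⟨y', hy'⟩⟩ h'
    simp only [Prod.mk.injEq, Fin.mk.injEq]
    obtain ⟨rfl, e⟩ | ⟨rfl, e⟩ := fin2_cases j <;>
    simp only [mkM, mkU_z, mkU_nb, e, mkT_0, mkT_1, Fin.val_zero, Fin.val_one, Ed] at h h' <;>
    omega
  V := by
    rintro i hi j c hc ⟨⟨x, hx⟩, ⟨y, hy⟩⟩ ⟨h, hD⟩ ⟨⟨x', hx'⟩, ⟨y', hy'⟩⟩ h'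
    simp only [mkM, mkU_D] at hD
    obtain rfl := S.inj c hc _ (mem y (by omega) x) hD
    have : x' = x ∧ y' = y + 1 := by
      obtain ⟨rfl, e⟩ | ⟨rfl, e⟩ := fin2_cases j <;>
      simp only [mkM, mkU_z, mkU_nb, e, mkT_0, mkT_1, Fin.val_zero, Fin.val_one, Ed] at h h' <;>
      omega
    obtain ⟨rfl, rfl⟩ := this
    exact ⟨_, mem _ (by omega) _, hV y (by omega) _, by simp [mkM, mkU_D]⟩
  sync := by
    rintro m hm j ⟨⟨x, hx⟩, ⟨y, hy⟩⟩ h ⟨⟨x', hx'⟩, ⟨y', hy'⟩⟩ h'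
    simp only [mkM, mkU_z, mkU_nb, mkT_0, mkT_1, Ed] at h h' ⊢
    omega
  H1 := by
    rintro m hm j c hc ⟨⟨x, hx⟩, ⟨y, hy⟩⟩ ⟨h, hD⟩ ⟨⟨x', hx'⟩, ⟨y', hy'⟩⟩ h'
    simp only [mkM, mkU_D] at hD
    obtain rfl := S.inj c hc _ (mem y (by omega) x) hD
    simp only [mkM, mkU_z, mkT_1, Ed] at h h'
    have : y' = y := by omega
    subst this
    refine ⟨_, mem y' (by omega) x', ?_, by simp [mkM, mkU_D]⟩
    have : x' = x + 1 ∨ (x + 1 = 4 * w ∧ x' = 4*w-4) := by omega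
    obtain rfl | ⟨h1, rfl⟩ := this
    · exact hH y' (by omega) x
    · rw [← hp y' (by omega), ← h1]; exact hH y' (by omega) x
  H2 := by
    rintro m hm j c hc ⟨⟨x, hx⟩, ⟨y, hy⟩⟩ ⟨h, hD⟩ ⟨⟨x', hx'⟩, ⟨y', hy'⟩⟩ h'
    simp only [mkM, mkU_D] at hD
    obtain rfl := S.inj c hc _ (mem y (by omega) x) hD
    simp only [mkM, mkU_z, mkT_1, Ed] at h h'
    have : y' = y := by omega
    subst this
    refine ⟨_, mem y' (by omega) x', ?_, by simp [mkM, mkU_D]⟩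
    have : x = x' + 1 := by omega
    subst this
    exact hH y' (by omega) x'
  corQ := by
    rintro ⟨⟨x, hx⟩, ⟨y, hy⟩⟩ h
    simp only [mkM, mkU_cor, mkU_Q] at h ⊢
    obtain ⟨rfl, rfl⟩ := h
    simp
  QK := by
    rintro q hq ⟨⟨x, hx⟩, ⟨y, hy⟩⟩ h
    simp only [mkM, mkU_K, mkU_Q] at h ⊢
    simp [h]
  QQ := by
    rintro q hq i hi ⟨⟨x, hx⟩, ⟨y, hy⟩⟩ h ⟨⟨x', hx'⟩, ⟨y', hy'⟩⟩ h'
    simp only [mkM, mkU_bt, mkU_Q, mkT_0, mkT_1, Ed] at h h' ⊢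
    refine ⟨by omega, ?_⟩
    obtain ⟨⟨_, rfl⟩, _⟩ := h
    have : x' = x + 1 ∨ (x + 1 = 4 * w ∧ x' = 4*w-4) := by omega
    rw [← Function.iterate_succ_apply' nxt]
    obtain rfl | ⟨h1, rfl⟩ := this
    · rfl
    · rw [hn, Nat.succ_eq_add_one, h1, show 4 * w = 4 + (4*w-4) by omega,
        Function.iterate_add_apply, hn]; rfl

theorem build_finsat {w N : ℕ} (hw : 0 < w) (h : Mod S n (mkM S n t w N)) :
    FinitelySatisfiable (Phi S n) :=
  ⟨Fin (4*w) × Fin (N+1), ⟨(⟨0, by omega⟩, ⟨0, by omega⟩)⟩, inferInstance, mkM S n t w N,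
    fun _ _ _ _ h1 h2 => mkT_trans _ _ _ _ _ _ _ _ h1 h2, (sat_Phi _ _ _).2 h⟩

end Build
section Machine

open Turing Turing.PartrecToTM2 Turing.TM2.Stmt Function

abbrev St := TM2.Stmt (fun _ : K' => Γ') Λ' (Option Γ')
abbrev Ctl := Option St × Option Γ'
abbrev Cell := K' → Option Γ'
abbrev Stk := K' → List Γ'
abbrev Tile := Ctl × Option Cell × Cell × Cell

instance fintypeK : Fintype K' :=
  ⟨{K'.main, K'.rev, K'.aux, K'.stack}, fun x => by cases x <;> simp⟩

def delta : Ctl → Cell → Ctl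
  | (none, v), _ => (none, v)
  | (some (push _ _ q), v), _ => (some q, v)
  | (some (peek k f q), v), m => (some q, f v (m k))
  | (some (pop k f q), v), m => (some q, f v (m k))
  | (some (load a q), v), _ => (some q, a v)
  | (some (branch f q1 q2), v), _ => (some (cond (f v) q1 q2), v)
  | (some (goto f), v), _ => (some (tr (f v)), v)
  | (some TM2.Stmt.halt, v), _ => (none, v)

def beta : Ctl → Option Cell → Cell → Cell → Cell
  | (some (push k f _), v), none, m, _ => update m k (some (f v))
  | (some (push k _ _), _), some l, m, _ => update m k (l k)
  | (some (pop k _ _), _), _, m, r => update m k (r k)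
  | _, _, m, _ => m

def stkStep : Ctl → Stk → Stk
  | (some (push k f _), v), s => update s k (f v :: s k)
  | (some (pop k _ _), _), s => update s k (s k).tail
  | _, s => s

def cell (s : Stk) (x : ℕ) : Cell := fun k => (s k)[x]?
def lft (s : Stk) : ℕ → Option Cell
  | 0 => none
  | x+1 => some (cell s x)

theorem cell_step (g : Ctl) (s : Stk) (x : ℕ) :
    cell (stkStep g s) x = beta g (lft s x) (cell s x) (cell s (x+1)) := by
  obtain ⟨o, v⟩ := g
  rcases o with _ | q
  · rfl
  cases q <;> try rfl
  · rename_i k f q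
    cases x <;> ext1 k' <;> by_cases hk : k' = k
    all_goals first
      | (subst hk; simp [stkStep, beta, cell, lft])
      | simp [stkStep, beta, cell, lft, hk]
  · rename_i k f q
    ext1 k'
    by_cases hk : k' = k
    · subst hk; simp [stkStep, beta, cell]
    · simp [stkStep, beta, cell, hk]

def mini (a : Ctl × Stk) : Ctl × Stk := (delta a.1 (cell a.2 0), stkStep a.1 a.2)

def tile (a : Ctl × Stk) (x : ℕ) : Tile := (a.1, lft a.2 x, cell a.2 x, cell a.2 (x+1))

def letter (q : ℕ) : Cell := fun k => if k = K'.main then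
  (if q = 1 then some Γ'.cons else if q = 2 then some Γ'.bit0 else if q = 3 then some Γ'.bit1
    else none) else none

def bad (c : Tile) : Prop := c.1.1 = none ∧ c.2.1 = none ∧ c.2.2.1 K'.main = some Γ'.bit1

def ctl0 (c : ToPartrec.Code) : Ctl := (some (tr (trNormal c Cont'.halt)), none)

open Classical in
noncomputable def tiles (c : ToPartrec.Code) : Finset Tile :=
  (TM2.stmts tr (codeSupp c Cont'.halt) ×ˢ Finset.univ) ×ˢ Finset.univ

open Classical in
noncomputable def sys (c : ToPartrec.Code) : Sys where
  C := Tile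
  Cs := tiles c
  H a b := a.1 = b.1 ∧ b.2.1 = some a.2.2.1 ∧ a.2.2.2 = b.2.2.1 ∧ ¬ bad a
  V a b := b.2.2.1 = beta a.1 a.2.1 a.2.2.1 a.2.2.2 ∧ (a.2.1 = none ↔ b.2.1 = none) ∧
    (a.2.1 = none → b.1 = delta a.1 a.2.2.1)
  endTile a := a.1.1 = none
  corner a := a.2.1 = none
  I q a := a.1 = ctl0 c ∧ a.2.2.1 = letter q
  code a := (tiles c).toList.idxOf a
  inj _ ha _ _ h := (List.idxOf_inj (Finset.mem_toList.2 ha)).1 h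

theorem mem_tiles (c) (a : Tile) : a ∈ tiles c ↔ a.1.1 ∈ TM2.stmts tr (codeSupp c Cont'.halt) := by
  simp [tiles]

variable (c : ToPartrec.Code)

/-- a row with consistent neighbours is determined by ctl and cells -/
theorem tile_ext (a : Ctl × Stk) (d : ℕ → Tile) (h0 : (d 0).2.1 = none) (hg : (d 0).1 = a.1)
    (hm : ∀ x, (d x).2.2.1 = cell a.2 x) (hH : ∀ x, (sys c).H (d x) (d (x+1))) :
    d = tile a := by
  have hg' : ∀ x, (d x).1 = a.1 := by
    intro x
    induction x with
    | zero => exact hg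
    | succ x ih => rw [← (hH x).1, ih]
  funext x
  have h1 := hg' x
  have h2 := hm x
  have h3 : (d x).2.2.2 = cell a.2 (x+1) := by rw [(hH x).2.2.1, hm]
  have h4 : (d x).2.1 = lft a.2 x := by
    cases x with
    | zero => exact h0
    | succ x => rw [(hH x).2.1, hm]; rfl
  exact Prod.ext h1 (Prod.ext h4 (Prod.ext h2 h3))

theorem tile_V (a : Ctl × Stk) (x : ℕ) : (sys c).V (tile a x) (tile (mini a) x) := by
  refine ⟨cell_step _ _ _, ?_, ?_⟩
  · cases x <;> simp [tile, lft]
  · cases x <;> simp [tile, lft, mini]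

theorem tile_uniq (a : Ctl × Stk) (d : ℕ → Tile) (hV : ∀ x, (sys c).V (tile a x) (d x))
    (hH : ∀ x, (sys c).H (d x) (d (x+1))) : d = tile (mini a) := by
  refine tile_ext c _ d ((hV 0).2.1.1 rfl) ((hV 0).2.2 rfl) (fun x => ?_) hH
  rw [(hV x).1]
  exact (cell_step _ _ _).symm

def isBad (a : Ctl × Stk) : Prop := a.1.1 = none ∧ cell a.2 0 K'.main = some Γ'.bit1

theorem tile_H (a : Ctl × Stk) (ha : ¬ isBad a) (x : ℕ) : (sys c).H (tile a x) (tile a (x+1)) := by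
  refine ⟨rfl, rfl, rfl, ?_⟩
  rintro ⟨h1, h2, h3⟩
  cases x with
  | zero => exact ha ⟨h1, h3⟩
  | succ x => simp [tile, lft] at h2

theorem mini_halted (a : Ctl × Stk) (h : a.1.1 = none) : mini a = a := by
  obtain ⟨⟨o, v⟩, s⟩ := a
  obtain rfl : o = none := h
  rfl

theorem mini_stmts (a : Ctl × Stk) (h : a.1.1 ∈ TM2.stmts tr (codeSupp c Cont'.halt)) :
    (mini a).1.1 ∈ TM2.stmts tr (codeSupp c Cont'.halt) := by
  classical
  obtain ⟨⟨o, v⟩, s⟩ := a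
  rcases o with _ | q
  · exact h
  have hn : none ∈ TM2.stmts tr (codeSupp c Cont'.halt) := by simp [TM2.stmts]
  cases q with
  | goto f =>
    have := @TM2.stmts_supportsStmt _ _ _ _ ⟨trNormal c Cont'.halt⟩ _ _ _ (tr_supports c Cont'.halt) h
    have := this v
    exact Finset.some_mem_insertNone.2 (Finset.mem_biUnion.2 ⟨_, this, TM2.stmts₁_self⟩)
  | halt => exact hn
  | branch f q1 q2 =>
    refine TM2.stmts_trans ?_ h
    simp only [TM2.stmts₁]
    cases f v <;> simp [TM2.stmts₁_self]
  | _ => 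
    refine TM2.stmts_trans ?_ h
    simp [TM2.stmts₁, TM2.stmts₁_self]

/-- macro step -/
theorem mini_stepAux (q : St) (v : Option Γ') (s : Stk) : ∃ N,
    mini^[N] ((some q, v), s) = (((TM2.stepAux q v s).l.map tr, (TM2.stepAux q v s).var),
      (TM2.stepAux q v s).stk) := by
  have key : ∀ (a b : Ctl × Stk), (∃ N, mini^[N] (mini a) = b) → ∃ N, mini^[N] a = b := by
    rintro a b ⟨N, h⟩
    exact ⟨N+1, h⟩
  have hc : ∀ (s : Stk) k, cell s 0 k = (s k).head? := by
    intro s k; simp [cell, List.head?_eq_getElem?]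
  induction q generalizing v s with
  | goto f => exact ⟨1, rfl⟩
  | halt => exact ⟨1, rfl⟩
  | branch f q1 q2 ih1 ih2 =>
    apply key
    simp only [mini, delta, stkStep, TM2.stepAux]
    cases f v
    · exact ih2 _ _
    · exact ih1 _ _
  | load f q ih => exact key _ _ (ih _ _)
  | push k f q ih => exact key _ _ (ih _ _)
  | peek k f q ih =>
    apply key
    simp only [mini, delta, stkStep, TM2.stepAux, hc]
    exact ih _ _
  | pop k f q ih =>
    apply key
    simp only [mini, delta, stkStep, TM2.stepAux, hc]
    exact ih _ _

abbrev MCfg := TM2.Cfg (fun _ : K' => Γ') Λ' (Option Γ')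
def conv (a : MCfg) : Ctl × Stk := ((a.l.map tr, a.var), a.stk)

theorem mini_reaches (a b : MCfg) (h : StateTransition.Reaches (TM2.step tr) a b) :
    ∃ N, mini^[N] (conv a) = conv b := by
  induction h with
  | refl => exact ⟨0, rfl⟩
  | tail _ h2 ih =>
    rename_i b _ _
    obtain ⟨N, hN⟩ := ih
    obtain ⟨l, v, s⟩ := b
    rcases l with _ | l
    · exact nomatch (h2 : (none : Option MCfg) = some _)
    · simp only [TM2.step, Option.mem_def, Option.some.injEq] at h2
      subst h2
      obtain ⟨N', hN'⟩ := mini_stepAux (tr l) v s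
      exact ⟨N' + N, by rw [iterate_add_apply, hN]; exact hN'⟩

def cfg0 (v : List ℕ) : Ctl × Stk := (ctl0 c, K'.elim (trList v) [] [] [])

theorem mini_eval (v w : List ℕ) (h : w ∈ c.eval v) :
    ∃ N, mini^[N] (cfg0 c v) = ((none, none), K'.elim (trList w) [] [] []) := by
  have h1 : PartrecToTM2.halt w ∈ StateTransition.eval (TM2.step tr) (init c v) := by
    rw [tr_eval]
    exact Part.mem_map _ h
  obtain ⟨h2, -⟩ := StateTransition.mem_eval.1 h1
  exact mini_reaches _ _ h2

end Machine
section Runs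

open Turing Turing.PartrecToTM2 Function

theorem nxt_zero_iter (x : ℕ) : nxt^[x] 0 = 0 := iterate_fixed rfl x

theorem letter_pos (p : PosNum) (x : ℕ) :
    (trPosNum p ++ [Γ'.cons])[x]? = letter (sym (nxt^[x] ((p : ℕ) + 1))) K'.main := by
  have base : ∀ x, ([Γ'.cons] : List Γ')[x]? = letter (sym (nxt^[x] 1)) K'.main := by
    intro x
    cases x with
    | zero => rfl
    | succ x => rw [iterate_succ_apply, show nxt 1 = 0 from rfl, nxt_zero_iter]; simp [letter, sym]
  induction p generalizing x with
  | one =>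
    cases x with
    | zero => rfl
    | succ x =>
      rw [iterate_succ_apply]
      exact base x
  | bit0 p ih =>
    have hp := p.cast_pos (α := ℕ)
    cases x with
    | zero =>
      have : sym ((PosNum.bit0 p : ℕ) + 1) = 2 := by
        rw [PosNum.cast_bit0, sym]; split <;> omega
      rw [iterate_zero_apply, this]; rfl
    | succ x =>
      have : nxt ((PosNum.bit0 p : ℕ) + 1) = (p : ℕ) + 1 := by
        rw [PosNum.cast_bit0, nxt]; split <;> omega
      rw [iterate_succ_apply, this, ← ih]; rfl
  | bit1 p ih =>
    have hp := p.cast_pos (α := ℕ)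
    cases x with
    | zero =>
      have : sym ((PosNum.bit1 p : ℕ) + 1) = 3 := by
        rw [PosNum.cast_bit1, sym]; split <;> omega
      rw [iterate_zero_apply, this]; rfl
    | succ x =>
      have : nxt ((PosNum.bit1 p : ℕ) + 1) = (p : ℕ) + 1 := by
        rw [PosNum.cast_bit1, nxt]; split <;> omega
      rw [iterate_succ_apply, this, ← ih]; rfl

theorem letter_nat (n x : ℕ) :
    (trNat n ++ [Γ'.cons])[x]? = letter (sym (nxt^[x] (n + 1))) K'.main := by
  have h := Num.to_of_nat n
  rw [trNat]
  cases hn : (n : Num) with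
  | zero =>
    rw [hn] at h
    obtain rfl : n = 0 := h.symm
    cases x with
    | zero => rfl
    | succ x =>
      rw [iterate_succ_apply, show nxt (0+1) = 0 from rfl, nxt_zero_iter]; simp [letter, sym, trNum]
  | pos p =>
    rw [hn] at h
    have h : (p : ℕ) = n := h
    rw [← h]
    exact letter_pos p x

theorem cell_input (n x : ℕ) :
    cell (K'.elim (trList [n]) [] [] []) x = letter (sym (nxt^[x] (n + 1))) := by
  funext k
  cases k
  · exact letter_nat n x
  all_goals simp [cell, letter, K'.elim]

variable (c : ToPartrec.Code)

theorem run_stmts (n N : ℕ) :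
    (mini^[N] (cfg0 c [n])).1.1 ∈ TM2.stmts tr (codeSupp c Cont'.halt) := by
  induction N with
  | zero =>
    classical
    exact Finset.some_mem_insertNone.2 (Finset.mem_biUnion.2 ⟨_,
      codeSupp_self _ _ (trStmts₁_self _), TM2.stmts₁_self⟩)
  | succ N ih => rw [iterate_succ_apply']; exact mini_stmts c _ ih

theorem run_row {n : ℕ} {A : Type} {M : Str A} (hM : Mod (sys c) n M)
    (hT : ∀ k, Transitive (M.T k)) (y : ℕ) :
    (∃ j e, Row (sys c) M j e (tile (mini^[y] (cfg0 c [n])))) ∧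
      ∀ x, (sys c).H (tile (mini^[y] (cfg0 c [n])) x) (tile (mini^[y] (cfg0 c [n])) (x+1)) := by
  induction y with
  | zero =>
    obtain ⟨e, t, h1, h2, h3, h4⟩ := row_zero hM hT
    have : t = tile (cfg0 c [n]) := by
      refine tile_ext c _ t h2 (h3 0).1 (fun x => ?_) h4
      exact (h3 x).2.trans (cell_input n x).symm
    subst this
    exact ⟨⟨0, e, h1⟩, h4⟩
  | succ y ih =>
    rw [iterate_succ_apply']
    generalize mini^[y] (cfg0 c [n]) = a at ih
    by_cases ha : a.1.1 = none
    · rw [mini_halted a ha]; exact ih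
    · obtain ⟨⟨j, e, h1⟩, -⟩ := ih
      obtain ⟨e', t', h2, h3, h4⟩ := row_succ hM hT h1 (fun x => ha)
      have := tile_uniq c a t' h3 h4
      subst this
      exact ⟨⟨_, _, h2⟩, h4⟩

theorem reject {n : ℕ} (h : [1] ∈ c.eval [n]) : ¬ Satisfiable (Phi (sys c) n) := by
  rintro ⟨A, -, M, hT, hS⟩
  obtain ⟨N, hN⟩ := mini_eval c _ _ h
  have := (run_row c ((sat_Phi _ _ _).1 hS) hT N).2 0
  rw [hN] at this
  exact this.2.2.2 ⟨rfl, rfl, rfl⟩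

theorem cell_bdd (s : Stk) : ∃ B, ∀ x ≥ B, cell s x = fun _ => none := by
  refine ⟨Finset.univ.sup (fun k => (s k).length), fun x hx => ?_⟩
  funext k
  have := Finset.le_sup (f := fun k => (s k).length) (Finset.mem_univ k)
  exact List.getElem?_eq_none (this.trans hx)

theorem cell_bdd_all (f : ℕ → Stk) (N : ℕ) : ∃ B, ∀ y ≤ N, ∀ x ≥ B, cell (f y) x = fun _ => none := by
  choose B hB using fun y => cell_bdd (f y)
  refine ⟨(Finset.range (N+1)).sup B, fun y hy x hx => hB y x ?_⟩
  exact (Finset.le_sup (f := B) (Finset.mem_range.2 (by omega))).trans hx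

theorem tile_far (a : Ctl × Stk) (B : ℕ) (hB : ∀ x ≥ B, cell a.2 x = fun _ => none) (x : ℕ)
    (hx : B < x) : tile a x = (a.1, some (fun _ => none), (fun _ => none), fun _ => none) := by
  cases x with
  | zero => omega
  | succ x => simp [tile, lft, hB x (by omega), hB (x+1) (by omega), hB (x+1+1) (by omega)]

theorem nxt_dec (q x : ℕ) (hx : q ≤ x) : nxt^[x] q = 0 := by
  induction x generalizing q with
  | zero => simpa using hx
  | succ x ih =>
    rw [iterate_succ_apply]
    rcases Nat.lt_or_ge q 3 with h | h
    · interval_cases q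
      · exact nxt_zero_iter x
      · exact nxt_zero_iter x
      · apply ih; simp [nxt]; omega
    · apply ih; rw [nxt, if_neg (by omega)]; omega

theorem accept {n : ℕ} (h : [0] ∈ c.eval [n]) : FinitelySatisfiable (Phi (sys c) n) := by
  obtain ⟨N, hN⟩ := mini_eval c _ _ h
  obtain ⟨B, hB⟩ := cell_bdd_all (fun y => (mini^[y] (cfg0 c [n])).2) N
  have hw : 0 < B + n + 6 := by omega
  refine build_finsat (t := fun y x => (tile (mini^[y] (cfg0 c [n])) x : Tile))
    (w := B + n + 6) (N := N) hw (build hw ?_ rfl ?_ ?_ ?_ ?_ ?_ ?_)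
  · intro y _ x
    exact (mem_tiles c _).2 (run_stmts c n y)
  · intro x
    exact ⟨rfl, cell_input n x⟩
  · intro y hy x
    apply tile_H
    rintro ⟨h1, h2⟩
    have : mini^[N] (cfg0 c [n]) = mini^[y] (cfg0 c [n]) := by
      rw [show N = (N - y) + y by omega, iterate_add_apply]
      exact iterate_fixed (mini_halted _ h1) _
    rw [← this, hN] at h2
    simp [cell, K'.elim] at h2
  · intro y _ x
    show (sys c).V (tile (mini^[y] (cfg0 c [n])) x) (tile (mini^[y+1] (cfg0 c [n])) x)
    rw [iterate_succ_apply']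
    exact tile_V c _ x
  · intro x
    show (mini^[N] (cfg0 c [n])).1.1 = none
    rw [hN]
  · intro y hy
    show tile _ _ = tile _ _
    rw [tile_far _ B (hB y hy) _ (by omega), tile_far _ B (hB y hy) _ (by omega)]
  · exact nxt_dec _ _ (by omega)

end Runs
section Comp

theorem nxt_primrec : Primrec nxt := by
  unfold nxt
  refine Primrec.ite (Primrec.nat_le.comp Primrec.id (Primrec.const 1)) (Primrec.const 0) ?_
  exact Primrec.nat_add.comp (Primrec.nat_div.comp
    (Primrec.nat_sub.comp Primrec.id (Primrec.const 1)) (Primrec.const 2)) (Primrec.const 1)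

theorem sym_primrec : Primrec sym := by
  unfold sym
  refine Primrec.ite (Primrec.nat_le.comp Primrec.id (Primrec.const 1)) Primrec.id ?_
  exact Primrec.nat_add.comp (Primrec.const 2) (Primrec.nat_mod.comp
    (Primrec.nat_sub.comp Primrec.id (Primrec.const 1)) (Primrec.const 2))

theorem primrec_pair {f g : ℕ → ℕ} (hf : Primrec f) (hg : Primrec g) :
    Primrec fun n => Nat.pair (f n) (g n) := Primrec₂.natPair.comp hf hg

theorem primrec_self : Primrec fun n : ℕ => n := Primrec.id

theorem qrule_primrec : Primrec fun q => encode (qrule q) := by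
  simp only [qrule, qr, AA, all0, all1, p1, p2, b2, encode, pQ, pK]
  repeat' first
    | with_reducible exact Primrec.const _
    | with_reducible exact primrec_self
    | with_reducible exact nxt_primrec
    | with_reducible exact sym_primrec
    | with_reducible refine primrec_pair ?_ ?_

theorem qrules_primrec : Primrec fun n => encode (qrules n) := by
  have h : (fun n => encode (qrules n)) = fun n => Nat.rec (encode (qrule 0))
      (fun k ih => Nat.pair 5 (Nat.pair (encode (qrule (k+1))) ih)) n := by
    funext n
    induction n with
    | zero => rfl
    | succ n ih => simp only [qrules, encode, ih]
  rw [h]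
  refine Primrec.nat_rec₁ _ ?_
  exact Primrec₂.natPair.comp (Primrec.const _) (Primrec₂.natPair.comp
    (qrule_primrec.comp (Primrec.succ.comp Primrec.fst)) Primrec.snd)

theorem Phi_primrec (S : Sys) : Primrec fun n => encode (Phi S n) := by
  have h : (fun n => encode (Phi S n)) = fun n => Nat.pair 5 (Nat.pair (encode (fixed S))
    (Nat.pair 5 (Nat.pair (Nat.pair 9 (Nat.pair 7 (Nat.pair (Nat.pair 0 pcor)
      (Nat.pair 0 (Nat.pair 2 (Nat.succ n)))))) (encode (qrules (Nat.succ n)))))) := by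
    funext n
    simp only [Phi, encode, all0, p1, pQ, Nat.succ_eq_add_one]
  have hq : Primrec fun n => encode (qrules (Nat.succ n)) := qrules_primrec.comp Primrec.succ
  rw [h]
  repeat' first
    | with_reducible exact Primrec.const _
    | with_reducible exact Primrec.succ
    | with_reducible exact hq
    | with_reducible refine primrec_pair ?_ ?_

theorem exists_univ : ∃ c : Turing.ToPartrec.Code, ∀ n : ℕ,
    c.eval [n] = pure <$> (Denumerable.ofNat Nat.Partrec.Code n).eval n := by
  have h : Partrec fun n : ℕ => (Denumerable.ofNat Nat.Partrec.Code n).eval n :=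
    Nat.Partrec.Code.eval_part.comp (Computable.ofNat _) Computable.id
  obtain ⟨c, hc⟩ := Turing.ToPartrec.Code.exists_code (Nat.Partrec'.part_iff₁.2 h)
  exact ⟨c, fun n => hc ⟨[n], rfl⟩⟩

theorem insep (f : ℕ → Bool) (hf : Computable f)
    (h1 : ∀ φ : F 0, FinitelySatisfiable φ → f (encode φ) = true)
    (h2 : ∀ φ : F 0, f (encode φ) = true → Satisfiable φ) : False := by
  obtain ⟨c, hc⟩ := exists_univ
  have hg : Computable fun n => cond (f (encode (Phi (sys c) n))) 1 0 :=
    Computable.cond (hf.comp (Phi_primrec _).to_comp) (Computable.const 1) (Computable.const 0)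
  obtain ⟨d, hd⟩ := Nat.Partrec.Code.exists_code.1 (Partrec.nat_iff.1 hg.partrec)
  have h3 := hc (Encodable.encode d)
  rw [Denumerable.ofNat_encode, hd] at h3
  cases hb : f (encode (Phi (sys c) (Encodable.encode d)))
  · have : [0] ∈ c.eval [Encodable.encode d] := by
      rw [h3]; simp [hb]
    rw [h1 _ (accept c this)] at hb
    exact absurd hb (by decide)
  · have : [1] ∈ c.eval [Encodable.encode d] := by
      rw [h3]; simp [hb]
    exact reject c this (h2 _ hb)

theorem FinitelySatisfiable.sat {φ : F 0} (h : FinitelySatisfiable φ) : Satisfiable φ := by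
  obtain ⟨A, hA, -, M, h⟩ := h
  exact ⟨A, hA, M, h⟩

end Comp

/-- Theorem 8.  The satisfiability problem and the finite
satisfiability problem for FL² with equality in the presence of two distinguished
transitive relations are both undecidable: no computable function decides, given (the
Gödel number of) such a sentence, whether it has a model (respectively, a finite
model) in which both distinguished relations are transitive. -/
theorem flutedTwoTransEq_sat_and_finsat_undecidable :
    (¬ ∃ f : ℕ → Bool, Computable f ∧
      ∀ φ : F 0, (f (encode φ) = true ↔ Satisfiable φ)) ∧
    (¬ ∃ f : ℕ → Bool, Computable f ∧
      ∀ φ : F 0, (f (encode φ) = true ↔ FinitelySatisfiable φ)) := by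
  constructor
  · rintro ⟨f, hf, h⟩
    exact insep f hf (fun φ hφ => (h φ).2 hφ.sat) (fun φ hφ => (h φ).1 hφ)
  · rintro ⟨f, hf, h⟩
    exact insep f hf (fun φ hφ => (h φ).2 hφ) (fun φ hφ => ((h φ).1 hφ).sat)

end FlutedTwoTransEq
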